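/- For all integers n, m with 0 < m < n and every x ∈ [−1,1], the Lebesgue function of the scaling basis satisfies Σ_{k=1}^{n} |Φ_{n,k}^m(x)| ≤ (1 + 2π·(n+m−1)/n)·c_∞ ≤ (1 + 4π)·c_∞, where c_∞ = max_{|x|≤1} ∫_{−1}^{1} |v_n^m(x,y)| w(y) dy. -/

import Mathlib

open Real MeasureTheory Finset

/-- Chebyshev nodes of the first kind: `x_k^n = cos((2k-1)π/(2n))`. -/
noncomputable def chebNode (n k : ℕ) : ℝ :=
  Real.cos ((2 * (k : ℝ) - 1) * Real.pi / (2 * (n : ℝ)))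

/-- Orthonormal Chebyshev polynomials of the first kind. -/
noncomputable def chebP (r : ℕ) (x : ℝ) : ℝ :=
  if r = 0 then Real.sqrt (1 / Real.pi)
  else Real.sqrt (2 / Real.pi) * Real.cos ((r : ℝ) * Real.arccos x)

/-- Darboux kernel `K_r(x,y) = Σ_{s=0}^r p_s(x) p_s(y)`. -/
noncomputable def darboux (r : ℕ) (x y : ℝ) : ℝ :=
  ∑ s ∈ Finset.range (r + 1), chebP s x * chebP s y

/-- de la Vallée Poussin kernel `v_n^m(x,y) = (1/(2m)) Σ_{r=n-m}^{n+m-1} K_r(x,y)`. -/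
noncomputable def vpK (n m : ℕ) (x y : ℝ) : ℝ :=
  (1 / (2 * (m : ℝ))) * ∑ r ∈ Finset.Icc (n - m) (n + m - 1), darboux r x y

/-- The Chebyshev weight `w(x) = 1/√(1-x²)`. -/
noncomputable def chebW (x : ℝ) : ℝ := 1 / Real.sqrt (1 - x ^ 2)

/-- Scaling functions `Φ_{n,k}^m(x) = (π/n) v_n^m(x_k^n, x)`. -/
noncomputable def scal (n m k : ℕ) (x : ℝ) : ℝ :=
  (Real.pi / (n : ℝ)) * vpK n m (chebNode n k) x

/-- The nodes `y_k^n`, `k = 1,…,2n`: the Chebyshev nodes of order `3n` not of order `n`. -/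
noncomputable def yNode (n k : ℕ) : ℝ := chebNode (3 * n) (3 * k / 2)

/-- Wavelet functions `ψ_{n,k}^m`. -/
noncomputable def wav (n m k : ℕ) (x : ℝ) : ℝ :=
  (Real.pi / (3 * (n : ℝ))) * vpK (3 * n) m (yNode n k) x -
    ∑ h ∈ Finset.Icc 1 n,
      scal n m h (yNode n k) * ((Real.pi / (3 * (n : ℝ))) * vpK (3 * n) m (chebNode n h) x)

/-- Filter coefficients `μ_{n,r}^m`. -/
noncomputable def muC (n m r : ℕ) : ℝ :=
  if r ≤ n - m then 1
  else if r < n + m then ((m : ℝ) + (n : ℝ) - (r : ℝ)) / (2 * (m : ℝ))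
  else 0

/-- Squared norms `ν_{n,r}^m` of the orthogonal scaling basis. -/
noncomputable def nuC (n m r : ℕ) : ℝ :=
  if r ≤ n - m then 1 else ((m : ℝ) ^ 2 + ((n : ℝ) - (r : ℝ)) ^ 2) / (2 * (m : ℝ) ^ 2)

/-- Orthogonal scaling basis `Φ_{n,r}^⊥`. -/
noncomputable def scalPerp (n m r : ℕ) (x : ℝ) : ℝ :=
  if r ≤ n - m then chebP r x
  else muC n m r * chebP r x - muC n m (2 * n - r) * chebP (2 * n - r) x

/-- The sup norm on `[-1,1]`. -/
noncomputable def supNorm (f : ℝ → ℝ) : ℝ := ⨆ x : Set.Icc (-1 : ℝ) 1, |f x|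

/-- The Lebesgue constant `c_∞ = max_{|x|≤1} ∫_{-1}^1 |v_n^m(x,y)| w(y) dy`. -/
noncomputable def cInf (n m : ℕ) : ℝ :=
  ⨆ x : Set.Icc (-1 : ℝ) 1, ∫ y in (-1 : ℝ)..1, |vpK n m x y| * chebW y

/-!
Put `D_L = ∑_{j < L} e_j` on the circle `ℝ / Tℤ`. The product of `e_{-L}`, `conj D_L` and `D_{3L}`
has Fourier coefficient `L` at every frequency `|r| ≤ L`, so convolution with it multiplies each
trigonometric polynomial of degree at most `L` by `L`. It is bounded by `3 |D_L|²`, and the values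
of `|D_L|²` at any `L` equally spaced points add up to `L²`. Together these give the
Marcinkiewicz–Zygmund inequality `∑_{k < L} |f(a + kT/L)| ≤ 3 L ∫ |f|`, with the integral
over the normalised Haar measure. Under `y = cos t` the `n` Chebyshev nodes are half of a grid of
`2n` points and the VP kernel has degree at most `n + m - 1 ≤ 2n`, so `∑ |Φ_k(x)| ≤ 6 c_∞`;
finally `6 ≤ 1 + 2π`.
-/

section TrigonometricPolynomials

variable {T : ℝ}

/-- Trigonometric polynomials of degree at most `N` on the circle `ℝ / Tℤ`, as the complex span of
the exponentials `fourier r` with `|r| ≤ N`. -/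
noncomputable def trigPoly (T : ℝ) (N : ℕ) : Submodule ℂ C(AddCircle T, ℂ) :=
  Submodule.span ℂ (fourier '' Set.Icc (-(N : ℤ)) N)

lemma fourier_mem_trigPoly {N : ℕ} {r : ℤ} (hr : r ∈ Set.Icc (-(N : ℤ)) N) :
    fourier r ∈ trigPoly T N :=
  Submodule.subset_span (Set.mem_image_of_mem _ hr)

lemma trigPoly_mono {M N : ℕ} (h : M ≤ N) : trigPoly T M ≤ trigPoly T N :=
  Submodule.span_mono (Set.image_mono (Set.Icc_subset_Icc (by omega) (by omega)))

/-- The one-sided Dirichlet sum `∑_{j < L} e_j`, whose shifts and products build the reproducing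
kernel `trapezoidKernel`. -/
noncomputable def dirichletSum (T : ℝ) (L : ℕ) : C(AddCircle T, ℂ) :=
  ∑ j ∈ range L, fourier (j : ℤ)

/-- The de la Vallée Poussin kernel on the circle, with trapezoidal Fourier coefficients, written as
a product of Dirichlet sums. It is normalised so that the plateau `|r| ≤ L` has height `L`. -/
noncomputable def trapezoidKernel (T : ℝ) (L : ℕ) : C(AddCircle T, ℂ) :=
  fourier (-(L : ℤ)) * star (dirichletSum T L) * dirichletSum T (3 * L)

lemma star_fourier_mul_fourier (p q : ℤ) :
    star (fourier p : C(AddCircle T, ℂ)) * fourier q = fourier (q - p) := by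
  ext u
  rw [sub_eq_neg_add, fourier_add, fourier_neg]
  rfl

lemma star_dirichletSum_mul_dirichletSum (L M : ℕ) :
    star (dirichletSum T L) * dirichletSum T M =
      ∑ j ∈ range L, ∑ l ∈ range M, fourier ((l : ℤ) - j) := by
  simp_rw [dirichletSum, star_sum, sum_mul_sum, star_fourier_mul_fourier]

lemma norm_fourier_apply (q : ℤ) (u : AddCircle T) : ‖fourier q u‖ = 1 :=
  Circle.norm_coe _

lemma dirichletSum_add_apply (L M : ℕ) (u : AddCircle T) :
    dirichletSum T (L + M) u = dirichletSum T L u + fourier (L : ℤ) u * dirichletSum T M u := by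
  simp only [dirichletSum, sum_range_add, ContinuousMap.add_apply, ContinuousMap.sum_apply,
    Nat.cast_add, fourier_add, mul_sum]

lemma norm_dirichletSum_mul_le (c L : ℕ) (u : AddCircle T) :
    ‖dirichletSum T (c * L) u‖ ≤ c * ‖dirichletSum T L u‖ := by
  induction c with
  | zero => simp [dirichletSum]
  | succ c ih =>
    calc ‖dirichletSum T ((c + 1) * L) u‖
        ≤ ‖dirichletSum T (c * L) u‖ + ‖fourier ((c * L : ℕ) : ℤ) u * dirichletSum T L u‖ := by
          rw [add_mul, one_mul, dirichletSum_add_apply]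
          exact norm_add_le _ _
      _ ≤ (c + 1 : ℕ) * ‖dirichletSum T L u‖ := by
          rw [norm_mul, norm_fourier_apply]
          push_cast
          linarith

lemma norm_trapezoidKernel_le (L : ℕ) (u : AddCircle T) :
    ‖trapezoidKernel T L u‖ ≤ 3 * ‖dirichletSum T L u‖ ^ 2 := by
  calc ‖trapezoidKernel T L u‖
      = ‖dirichletSum T L u‖ * ‖dirichletSum T (3 * L) u‖ := by
        simp only [trapezoidKernel, ContinuousMap.mul_apply, ContinuousMap.star_apply, norm_mul,
          norm_fourier_apply, norm_star, one_mul]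
    _ ≤ ‖dirichletSum T L u‖ * ((3 : ℕ) * ‖dirichletSum T L u‖) := by
        gcongr
        exact norm_dirichletSum_mul_le 3 L u
    _ = 3 * ‖dirichletSum T L u‖ ^ 2 := by
        push_cast
        ring

end TrigonometricPolynomials

section MarcinkiewiczZygmund

variable {T : ℝ} [Fact (0 < T)]

open AddCircle

lemma integrable_haarAddCircle_of_continuous {E : Type*} [NormedAddCommGroup E]
    {f : AddCircle T → E} (hf : Continuous f) : Integrable f haarAddCircle :=
  hf.integrable_of_hasCompactSupport (HasCompactSupport.of_compactSpace f)

lemma fourierCoeff_trapezoidKernel {L : ℕ} {r : ℤ} (hr : r ∈ Set.Icc (-(L : ℤ)) L) :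
    fourierCoeff (trapezoidKernel T L) r = L := by
  have hV : ⇑(trapezoidKernel T L) =
      ∑ j ∈ range L, ∑ l ∈ range (3 * L), ⇑(fourier (T := T) ((l : ℤ) - j - L)) := by
    ext u
    simp only [trapezoidKernel, mul_assoc, star_dirichletSum_mul_dirichletSum,
      ContinuousMap.mul_apply, ContinuousMap.sum_apply, Finset.sum_apply, mul_sum, ← fourier_add,
      neg_add_eq_sub]
  have hfreq (j : ℕ) (hj : j ∈ range L) :
      ∑ l ∈ range (3 * L), fourierCoeff (fourier (T := T) ((l : ℤ) - j - L)) r = 1 := by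
    have hl (l : ℕ) : (r = (l : ℤ) - j - L) ↔ (r + j + L).toNat = l := by
      have := hr.1
      omega
    have hmem : (r + j + L).toNat ∈ range (3 * L) := by
      have := hr.2
      rw [Finset.mem_range] at hj ⊢
      omega
    simp only [fourierCoeff_fourier, Pi.single_apply, hl, Finset.sum_ite_eq, hmem, if_true]
  have hint (q : ℤ) : Integrable (fourier (T := T) q) haarAddCircle :=
    integrable_haarAddCircle_of_continuous (map_continuous _)
  rw [hV, fourierCoeff.sum _ _ fun j _ => integrable_finsetSum' _ fun l _ => hint _,
    Finset.sum_apply]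
  simp_rw [fourierCoeff.sum _ _ fun (_ : ℕ) _ => hint _, Finset.sum_apply]
  rw [sum_congr rfl hfreq, sum_const, card_range, nsmul_one]

lemma integral_mul_comp_sub_eq {N : ℕ} {V : C(AddCircle T, ℂ)} {c : ℂ}
    (hV : ∀ r ∈ Set.Icc (-(N : ℤ)) N, fourierCoeff V r = c)
    {f : C(AddCircle T, ℂ)} (hf : f ∈ trigPoly T N) (t : AddCircle T) :
    ∫ s, f s * V (t - s) ∂haarAddCircle = c * f t := by
  induction hf using Submodule.span_induction with
  | mem f hf =>
    obtain ⟨r, hr, rfl⟩ := hf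
    calc ∫ s, fourier r s * V (t - s) ∂haarAddCircle
        = ∫ u, fourier r t * (fourier (-r) u • V u) ∂haarAddCircle := by
          rw [← integral_sub_left_eq_self _ _ t]
          congr with u
          rw [sub_sub_cancel, smul_eq_mul, ← mul_assoc]
          congr 1
          rw [fourier_apply, fourier_apply, fourier_apply, smul_sub, neg_smul, sub_eq_add_neg,
            toCircle_add, Circle.coe_mul]
      _ = c * fourier r t := by
          rw [integral_const_mul, ← fourierCoeff, hV r hr, mul_comm]
  | zero => simp
  | add f g _ _ ihf ihg =>
    simp only [ContinuousMap.add_apply, add_mul, mul_add]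
    rw [integral_add, ihf, ihg]
    all_goals exact integrable_haarAddCircle_of_continuous (by fun_prop)
  | smul z f _ ih =>
    simp only [ContinuousMap.smul_apply, smul_eq_mul, mul_assoc]
    rw [integral_const_mul, ih, mul_left_comm]

lemma sum_fourier_grid {L : ℕ} (hL : L ≠ 0) (q : ℤ) (a : AddCircle T) :
    ∑ k ∈ range L, fourier q (a + ((k * (T / L) : ℝ) : AddCircle T)) =
      if (L : ℤ) ∣ q then L * fourier q a else 0 := by
  have hζ := Complex.isPrimitiveRoot_exp L hL
  set ζ := Complex.exp (2 * π * Complex.I / L)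
  have hterm (k : ℕ) :
      fourier q (a + ((k * (T / L) : ℝ) : AddCircle T)) = fourier q a * (ζ ^ q) ^ k := by
    have hT : (T : ℂ) ≠ 0 := mod_cast (Fact.out : 0 < T).ne'
    rw [fourier_apply, smul_add, toCircle_add, Circle.coe_mul, ← fourier_apply, ← fourier_apply,
      fourier_coe_apply, ← Complex.exp_int_mul, ← Complex.exp_nat_mul]
    congr 2
    push_cast
    field_simp
  simp_rw [hterm, ← mul_sum]
  split_ifs with hq
  · rw [(hζ.zpow_eq_one_iff_dvd q).2 hq]
    simp [mul_comm]
  · have hne : ζ ^ q ≠ 1 := mt (hζ.zpow_eq_one_iff_dvd q).1 hq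
    have hpow : (ζ ^ q) ^ L = 1 := by
      rw [← zpow_natCast, zpow_comm, zpow_natCast, hζ.pow_eq_one, one_zpow]
    rw [geom_sum_eq hne, hpow, sub_self, zero_div, mul_zero]

lemma sum_norm_sq_dirichletSum_grid {L : ℕ} (hL : L ≠ 0) (a : AddCircle T) :
    ∑ k ∈ range L, ‖dirichletSum T L (a + ((k * (T / L) : ℝ) : AddCircle T))‖ ^ 2 =
      (L : ℝ) ^ 2 := by
  have hsq (u : AddCircle T) : ((‖dirichletSum T L u‖ ^ 2 : ℝ) : ℂ) =
      ∑ j ∈ range L, ∑ l ∈ range L, fourier ((l : ℤ) - j) u := by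
    have h := DFunLike.congr_fun (star_dirichletSum_mul_dirichletSum (T := T) L L) u
    simp only [ContinuousMap.sum_apply] at h
    rw [← h]
    push_cast
    exact (Complex.conj_mul' _).symm
  have hdiag (j : ℕ) (hj : j ∈ range L) :
      ∑ k ∈ range L, ∑ l ∈ range L,
        fourier ((l : ℤ) - j) (a + ((k * (T / L) : ℝ) : AddCircle T)) = L := by
    have hdvd (l : ℕ) (hl : l ∈ range L) : (L : ℤ) ∣ (l : ℤ) - j ↔ l = j := by
      rw [Finset.mem_range] at hj hl
      refine ⟨fun h => ?_, fun h => by simp [h]⟩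
      have := Int.eq_zero_of_abs_lt_dvd h (abs_lt.2 (by omega))
      omega
    rw [sum_comm]
    simp_rw [sum_fourier_grid hL]
    rw [sum_congr rfl fun l hl => if_congr (hdvd l hl) rfl rfl, sum_ite_eq', if_pos hj, sub_self,
      fourier_zero, mul_one]
  rw [← Complex.ofReal_inj, Complex.ofReal_sum]
  simp_rw [hsq]
  rw [sum_comm, sum_congr rfl hdiag]
  simp [sq]

lemma mul_norm_le_integral_norm_mul {L : ℕ} {f : C(AddCircle T, ℂ)} (hf : f ∈ trigPoly T L)
    (t : AddCircle T) :
    L * ‖f t‖ ≤ ∫ s, ‖f s‖ * (3 * ‖dirichletSum T L (t - s)‖ ^ 2) ∂haarAddCircle := by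
  calc L * ‖f t‖
      = ‖∫ s, f s * trapezoidKernel T L (t - s) ∂haarAddCircle‖ := by
        rw [integral_mul_comp_sub_eq (fun _ => fourierCoeff_trapezoidKernel) hf, norm_mul,
          Complex.norm_natCast]
    _ ≤ ∫ s, ‖f s * trapezoidKernel T L (t - s)‖ ∂haarAddCircle := norm_integral_le_integral_norm _
    _ ≤ ∫ s, ‖f s‖ * (3 * ‖dirichletSum T L (t - s)‖ ^ 2) ∂haarAddCircle := by
        refine integral_mono (integrable_haarAddCircle_of_continuous (by fun_prop))
          (integrable_haarAddCircle_of_continuous (by fun_prop)) fun s => ?_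
        rw [norm_mul]
        gcongr
        exact norm_trapezoidKernel_le L _

theorem sum_norm_grid_le_integral_norm {L : ℕ} {f : C(AddCircle T, ℂ)} (hf : f ∈ trigPoly T L)
    (a : AddCircle T) :
    ∑ k ∈ range L, ‖f (a + ((k * (T / L) : ℝ) : AddCircle T))‖ ≤
      3 * L * ∫ s, ‖f s‖ ∂haarAddCircle := by
  rcases eq_or_ne L 0 with rfl | hL
  · simp
  set t : ℕ → AddCircle T := fun k => a + ((k * (T / L) : ℝ) : AddCircle T) with ht
  have hsum (s : AddCircle T) : ∑ k ∈ range L, ‖dirichletSum T L (t k - s)‖ ^ 2 = (L : ℝ) ^ 2 := by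
    simp_rw [ht, add_sub_right_comm]
    exact sum_norm_sq_dirichletSum_grid hL (a - s)
  refine le_of_mul_le_mul_left ?_ (by positivity : (0 : ℝ) < L)
  calc L * ∑ k ∈ range L, ‖f (t k)‖
      ≤ ∑ k ∈ range L, ∫ s, ‖f s‖ * (3 * ‖dirichletSum T L (t k - s)‖ ^ 2) ∂haarAddCircle := by
        rw [mul_sum]
        gcongr with k
        exact mul_norm_le_integral_norm_mul hf (t k)
    _ = ∫ s, 3 * (L : ℝ) ^ 2 * ‖f s‖ ∂haarAddCircle := by
        rw [← integral_finsetSum _ fun k _ =>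
          integrable_haarAddCircle_of_continuous (by fun_prop)]
        simp_rw [← mul_sum, hsum, mul_comm]
    _ = L * (3 * L * ∫ s, ‖f s‖ ∂haarAddCircle) := by
        rw [integral_const_mul]
        ring

end MarcinkiewiczZygmund

section ChebyshevNodes

open AddCircle

local instance fact_two_pi_pos : Fact (0 < 2 * π) := ⟨Real.two_pi_pos⟩

lemma integral_mul_chebW_eq_integral_cos (g : ℝ → ℝ) :
    ∫ y in (-1 : ℝ)..1, g y * chebW y = ∫ t in (0 : ℝ)..π, g (Real.cos t) := by
  simp_rw [← Polynomial.Chebyshev.integral_measureT_eq_integral_cos,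
    Polynomial.Chebyshev.integral_measureT, chebW, Real.sqrt_inv, one_div]

lemma integral_haarAddCircle_comp_cos {h : C(AddCircle (2 * π), ℝ)} {g : ℝ → ℝ}
    (hg : ∀ t : ℝ, h t = g (Real.cos t)) :
    ∫ θ, h θ ∂haarAddCircle = π⁻¹ * ∫ y in (-1 : ℝ)..1, g y * chebW y := by
  have hint (a b : ℝ) : IntervalIntegrable (fun t : ℝ => g (Real.cos t)) volume a b := by
    simp_rw [← hg]
    exact (h.continuous.comp (AddCircle.continuous_mk' _)).intervalIntegrable a b
  have heven : ∫ t in (-π)..0, g (Real.cos t) = ∫ t in (0 : ℝ)..π, g (Real.cos t) := by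
    simpa using (intervalIntegral.integral_comp_neg (a := 0) (b := π) fun t => g (Real.cos t)).symm
  calc ∫ θ, h θ ∂haarAddCircle
      = (2 * π)⁻¹ * ∫ t in (-π)..π, g (Real.cos t) := by
        rw [integral_haarAddCircle, smul_eq_mul, ← AddCircle.intervalIntegral_preimage _ (-π),
          show -π + 2 * π = π by ring]
        simp_rw [hg]
    _ = π⁻¹ * ∫ y in (-1 : ℝ)..1, g y * chebW y := by
        rw [← intervalIntegral.integral_add_adjacent_intervals (hint _ 0) (hint 0 _), heven,
          integral_mul_chebW_eq_integral_cos]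
        field_simp
        ring

theorem sum_abs_chebNode_le_integral {n : ℕ} (hn : n ≠ 0) {f : C(AddCircle (2 * π), ℂ)}
    (hf : f ∈ trigPoly (2 * π) (2 * n)) {g : ℝ → ℝ} (hfg : ∀ t : ℝ, f t = g (Real.cos t)) :
    π / n * ∑ k ∈ Icc 1 n, |g (chebNode n k)| ≤ 6 * ∫ y in (-1 : ℝ)..1, |g y| * chebW y := by
  set a : AddCircle (2 * π) := ((-π / (2 * n) : ℝ) : AddCircle (2 * π)) with ha
  have hnode (k : ℕ) :
      |g (chebNode n k)| = ‖f (a + ((k * (2 * π / (2 * n : ℕ)) : ℝ) : AddCircle (2 * π)))‖ := by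
    rw [ha, ← AddCircle.coe_add, hfg, Complex.norm_real, Real.norm_eq_abs, chebNode]
    congr 3
    push_cast
    field_simp
    ring
  have hint : ∫ θ, ‖f θ‖ ∂haarAddCircle = π⁻¹ * ∫ y in (-1 : ℝ)..1, |g y| * chebW y :=
    integral_haarAddCircle_comp_cos (h := ⟨fun θ => ‖f θ‖, by fun_prop⟩) (g := fun y => |g y|)
      fun t => by simp [hfg]
  calc π / n * ∑ k ∈ Icc 1 n, |g (chebNode n k)|
      ≤ π / n * ∑ k ∈ range (2 * n),
          ‖f (a + ((k * (2 * π / (2 * n : ℕ)) : ℝ) : AddCircle (2 * π)))‖ := by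
        simp_rw [hnode]
        gcongr
        intro k hk
        rw [Finset.mem_Icc] at hk
        rw [Finset.mem_range]
        omega
    _ ≤ π / n * (3 * (2 * n : ℕ) * ∫ θ, ‖f θ‖ ∂haarAddCircle) := by
        gcongr
        exact sum_norm_grid_le_integral_norm hf a
    _ = 6 * ∫ y in (-1 : ℝ)..1, |g y| * chebW y := by
        rw [hint]
        push_cast
        field_simp
        ring

end ChebyshevNodes

section VPKernel

lemma chebP_cos (r : ℕ) (t : ℝ) : chebP r (Real.cos t) = chebP r 1 * Real.cos (r * t) := by
  have harccos : Real.cos (r * Real.arccos (Real.cos t)) = Real.cos (r * t) := by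
    have h := Polynomial.Chebyshev.T_real_cos (Real.arccos (Real.cos t)) r
    rw [Real.cos_arccos (Real.neg_one_le_cos t) (Real.cos_le_one t),
      Polynomial.Chebyshev.T_real_cos] at h
    exact_mod_cast h.symm
  rcases eq_or_ne r 0 with rfl | hr
  · simp [chebP]
  · simp [chebP, hr, harccos]

lemma exists_mem_trigPoly_eq_cos (r : ℕ) :
    ∃ f ∈ trigPoly (2 * π) r, ∀ t : ℝ, f t = Real.cos (r * t) := by
  refine ⟨(1 / 2 : ℂ) • (fourier (r : ℤ) + fourier (-(r : ℤ))),
    Submodule.smul_mem _ _ (add_mem (fourier_mem_trigPoly ?_) (fourier_mem_trigPoly ?_)),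
    fun t => ?_⟩
  · simp
  · simp
  · rw [ContinuousMap.smul_apply, ContinuousMap.add_apply, fourier_coe_apply, fourier_coe_apply,
      Complex.ofReal_cos, Complex.cos, smul_eq_mul, one_div_mul_eq_div]
    congr 3 <;> push_cast <;> field_simp

lemma exists_mem_trigPoly_eq_vpK (n m : ℕ) (x : ℝ) :
    ∃ f ∈ trigPoly (2 * π) (n + m - 1), ∀ t : ℝ, f t = vpK n m x (Real.cos t) := by
  choose c hc hc_apply using exists_mem_trigPoly_eq_cos
  refine ⟨(1 / (2 * m) : ℂ) • ∑ r ∈ Icc (n - m) (n + m - 1), ∑ s ∈ range (r + 1),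
    (chebP s x * chebP s 1 : ℂ) • c s, ?_, fun t => ?_⟩
  · refine Submodule.smul_mem _ _ (sum_mem fun r hr => sum_mem fun s hs =>
      Submodule.smul_mem _ _ (trigPoly_mono ?_ (hc s)))
    exact (mem_range_succ_iff.1 hs).trans (Finset.mem_Icc.1 hr).2
  · simp only [ContinuousMap.smul_apply, ContinuousMap.sum_apply, hc_apply, smul_eq_mul, vpK,
      darboux, chebP_cos, mul_assoc]
    push_cast
    rfl

lemma vpK_comm (n m : ℕ) (x y : ℝ) : vpK n m x y = vpK n m y x := by
  simp only [vpK, darboux, mul_comm (chebP _ x)]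

lemma continuous_chebP (r : ℕ) : Continuous (chebP r) := by
  unfold chebP
  split_ifs <;> fun_prop

lemma continuous_vpK (n m : ℕ) : Continuous (Function.uncurry (vpK n m)) := by
  have := continuous_chebP
  simp only [Function.uncurry_def, vpK, darboux]
  fun_prop

lemma integral_abs_vpK_le_cInf (n m : ℕ) {x : ℝ} (hx : x ∈ Set.Icc (-1 : ℝ) 1) :
    ∫ y in (-1 : ℝ)..1, |vpK n m x y| * chebW y ≤ cInf n m := by
  have hcont : Continuous fun z : Set.Icc (-1 : ℝ) 1 =>
      ∫ y in (-1 : ℝ)..1, |vpK n m z y| * chebW y := by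
    simp_rw [integral_mul_chebW_eq_integral_cos fun y => |vpK n m _ y|]
    have := continuous_vpK n m
    exact intervalIntegral.continuous_parametric_intervalIntegral_of_continuous' (by fun_prop) 0 π
  exact le_ciSup (isCompact_range hcont).bddAbove ⟨x, hx⟩

lemma sum_abs_scal_le_six_mul_cInf {n m : ℕ} (hn : n ≠ 0) (hmn : m ≤ n) {x : ℝ}
    (hx : x ∈ Set.Icc (-1 : ℝ) 1) :
    ∑ k ∈ Icc 1 n, |scal n m k x| ≤ 6 * cInf n m := by
  obtain ⟨f, hf, hf_apply⟩ := exists_mem_trigPoly_eq_vpK n m x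
  calc ∑ k ∈ Icc 1 n, |scal n m k x|
      = π / n * ∑ k ∈ Icc 1 n, |vpK n m x (chebNode n k)| := by
        simp_rw [scal, abs_mul, vpK_comm n m _ x, ← mul_sum]
        rw [abs_of_nonneg (by positivity)]
    _ ≤ 6 * ∫ y in (-1 : ℝ)..1, |vpK n m x y| * chebW y :=
        sum_abs_chebNode_le_integral hn (trigPoly_mono (by omega) hf) hf_apply
    _ ≤ 6 * cInf n m := by
        gcongr
        exact integral_abs_vpK_le_cInf n m hx

lemma cInf_nonneg (n m : ℕ) : 0 ≤ cInf n m :=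
  Real.iSup_nonneg fun _ => intervalIntegral.integral_nonneg (by norm_num) fun _ _ =>
    mul_nonneg (abs_nonneg _) (one_div_nonneg.2 (Real.sqrt_nonneg _))

end VPKernel

theorem scal_lebesgue_function_bound (n m : ℕ) (hm : 0 < m) (hmn : m < n)
    (x : ℝ) (hx : x ∈ Set.Icc (-1 : ℝ) 1) :
    (∑ k ∈ Finset.Icc 1 n, |scal n m k x|) ≤
        (1 + 2 * Real.pi * ((n : ℝ) + (m : ℝ) - 1) / (n : ℝ)) * cInf n m ∧
      (1 + 2 * Real.pi * ((n : ℝ) + (m : ℝ) - 1) / (n : ℝ)) * cInf n m ≤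
        (1 + 4 * Real.pi) * cInf n m := by
  have hπ : 3 < π := Real.pi_gt_three
  have hn : (0 : ℝ) < n := by exact_mod_cast hm.trans hmn
  have hm_one : (1 : ℝ) ≤ m := by exact_mod_cast hm
  have hmn_le : (m : ℝ) ≤ n := by exact_mod_cast hmn.le
  have hlower : 6 ≤ 1 + 2 * π * ((n : ℝ) + m - 1) / n := by
    have : 2 * π ≤ 2 * π * ((n : ℝ) + m - 1) / n := by
      rw [le_div_iff₀ hn]
      gcongr
      linarith
    linarith
  have hupper : 2 * π * ((n : ℝ) + m - 1) / n ≤ 4 * π := by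
    rw [div_le_iff₀ hn]
    nlinarith
  refine ⟨(sum_abs_scal_le_six_mul_cInf (by omega) hmn.le hx).trans ?_, ?_⟩
  · exact mul_le_mul_of_nonneg_right hlower (cInf_nonneg n m)
  · exact mul_le_mul_of_nonneg_right (by linarith) (cInf_nonneg n m)
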